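/- Entire graphical self-shrinkers have polynomial volume growth: if Σ = Graph(u) ⊂ ℝⁿ⁺¹ is an entire graphical smooth self-shrinker, then there is a constant C > 0 such that Vol(Σ ∩ B_R) ≤ C R^{n+2} for all R > 1. -/

import Mathlib

open Real MeasureTheory Metric Filter
open scoped RealInnerProductSpace ENNReal NNReal

noncomputable section

abbrev E (n : ℕ) : Type := EuclideanSpace ℝ (Fin n)

variable {n : ℕ}

/-- `√(1 + |Du|²)`, the area element of the graph of `u`. -/
def aEl (u : E n → ℝ) (x : E n) : ℝ := Real.sqrt (1 + ‖gradient u x‖ ^ 2)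

/-- The vector field `Du/√(1+|Du|²)`. -/
def Vfield (u : E n → ℝ) (x : E n) : E n := (aEl u x)⁻¹ • gradient u x

/-- `div (Du/√(1+|Du|²))`. -/
def divV (u : E n → ℝ) (x : E n) : ℝ :=
  ∑ i, fderiv ℝ (fun y => Vfield u y i) x (EuclideanSpace.single i 1)

/-- The self-shrinker equation for an entire graph. -/
def ShrinkerEq (u : E n → ℝ) : Prop :=
  ∀ x, divV u x = (⟪x, gradient u x⟫ - u x) / (2 * aEl u x)

/-- The mean curvature of the graph of `u` with respect to the upward unit normal. -/
def meanCurv (u : E n → ℝ) (x : E n) : ℝ := -divV u x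

/-- The position vector `X = (x, u x)` of a point of the graph. -/
def Pos (u : E n → ℝ) (x : E n) : E (n + 1) :=
  (WithLp.equiv 2 (Fin (n + 1) → ℝ)).symm (Fin.snoc ((WithLp.equiv 2 (Fin n → ℝ)) x) (u x))

/-- The upward unit normal `n = (-Du, 1)/√(1+|Du|²)` at the point of the graph over `x`. -/
def NmlAt (u : E n → ℝ) (x : E n) : E (n + 1) :=
  (WithLp.equiv 2 (Fin (n + 1) → ℝ)).symm
    (Fin.snoc (fun i => -(Vfield u x i)) ((aEl u x)⁻¹))

/-- Projection of `ℝ^{n+1}` onto the first `n` coordinates. -/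
def projE (p : E (n + 1)) : E n :=
  (WithLp.equiv 2 (Fin n → ℝ)).symm fun i => p i.castSucc

/-- The unit normal of the graph, extended to `ℝ^{n+1}` independently of the last coordinate. -/
def Nml (u : E n → ℝ) (p : E (n + 1)) : E (n + 1) := NmlAt u (projE p)

/-- The inverse induced metric `g^{ij} = δ_{ij} - u_i u_j/(1+|Du|²)` of the graph. -/
def ginv (u : E n → ℝ) (x : E n) (i j : Fin n) : ℝ :=
  (if i = j then 1 else 0) - gradient u x i * gradient u x j / (aEl u x) ^ 2

/-- The Hessian `u_{ij}` of `u`. -/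
def hess (u : E n → ℝ) (x : E n) (i j : Fin n) : ℝ :=
  fderiv ℝ (fun y => gradient u y j) x (EuclideanSpace.single i 1)

/-- `|A|²`, the squared norm of the second fundamental form of the graph of `u`:
`|A|² = g^{ik} g^{jl} h_{ij} h_{kl}` with `h_{ij} = u_{ij}/√(1+|Du|²)`. -/
def A2 (u : E n → ℝ) (x : E n) : ℝ :=
  (∑ i, ∑ j, ∑ k, ∑ l, ginv u x i k * ginv u x j l * hess u x i j * hess u x k l) /
    (aEl u x) ^ 2

/-- Coordinate components `g^{ij} ∂_j f` of the tangential gradient. -/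
def gradCoord (u f : E n → ℝ) (x : E n) (i : Fin n) : ℝ :=
  ∑ j, ginv u x i j * gradient f x j

/-- The tangential gradient `∇_Σ f` (for `f` defined on the base, pulled back to the graph),
as a vector in `ℝ^{n+1}`. -/
def gradSigma (u f : E n → ℝ) (x : E n) : E (n + 1) :=
  (WithLp.equiv 2 (Fin (n + 1) → ℝ)).symm
    (Fin.snoc (fun i => gradCoord u f x i) (∑ i, gradient u x i * gradCoord u f x i))

/-- The Laplace–Beltrami operator of the graph:
`Δ_Σ f = (1/√g) ∂_i (√g g^{ij} ∂_j f)`. -/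
def lapSigma (u f : E n → ℝ) (x : E n) : ℝ :=
  (aEl u x)⁻¹ *
    ∑ i, fderiv ℝ (fun y => aEl u y * gradCoord u f y i) x (EuclideanSpace.single i 1)

/-- The tangential gradient `∇_Σ η` of an ambient function `η : ℝ^{n+1} → ℝ` along the graph:
the ambient gradient minus its normal component. -/
def gradSigmaAmb (u : E n → ℝ) (η : E (n + 1) → ℝ) (x : E n) : E (n + 1) :=
  gradient η (Pos u x) - ⟪gradient η (Pos u x), NmlAt u x⟫ • NmlAt u x

/-- `Vol(Σ ∩ B_R)`: the area of the part of the graph inside the ball of radius `R`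
in `ℝ^{n+1}`, computed by the area formula. -/
def sVol (u : E n → ℝ) (R : ℝ) : ℝ := ∫ x in {x : E n | ‖Pos u x‖ ≤ R}, aEl u x

/-- `M_R = sup_{|x| ≤ R} |u|`. -/
def supBall (u : E n → ℝ) (R : ℝ) : ℝ := ⨆ x : Metric.closedBall (0 : E n) R, |u x.1|

end

open Topology

noncomputable section

variable {n : ℕ} {u : E n → ℝ}

/-- The squared length `|x|² + u²` of the position vector of the graph of `u`. -/
def posSq (u : E n → ℝ) (x : E n) : ℝ := ‖x‖ ^ 2 + u x ^ 2

/-- `u - ⟨x, Du⟩`, which is `√(1+|Du|²)` times the support function of the graph of `u`. -/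
def suppFn (u : E n → ℝ) (x : E n) : ℝ := u x - ⟪x, gradient u x⟫

/-- The base components, times the area element, of the tangential part of the position vector. -/
def posTan (u : E n → ℝ) (x : E n) : E n := aEl u x • x + suppFn u x • Vfield u x

lemma norm_Pos_sq (u : E n → ℝ) (x : E n) : ‖Pos u x‖ ^ 2 = posSq u x := by
  simp [Pos, posSq, EuclideanSpace.norm_sq_eq, Fin.sum_univ_castSucc]

lemma aEl_pos (u : E n → ℝ) (x : E n) : 0 < aEl u x := by
  unfold aEl; positivity

lemma aEl_sq (u : E n → ℝ) (x : E n) : aEl u x ^ 2 = 1 + ‖gradient u x‖ ^ 2 :=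
  Real.sq_sqrt (by positivity)

lemma contDiff_gradient (hu : ContDiff ℝ (⊤ : ℕ∞) u) : ContDiff ℝ 1 (gradient u) := by
  have h : ContDiff ℝ 1 (fderiv ℝ u) := hu.fderiv_right (m := 1) (by norm_cast)
  exact (InnerProductSpace.toDual ℝ (E n)).symm.toContinuousLinearEquiv.contDiff.comp h

lemma contDiff_aEl (hu : ContDiff ℝ (⊤ : ℕ∞) u) : ContDiff ℝ 1 (aEl u) :=
  (contDiff_const.add ((contDiff_gradient hu).norm_sq ℝ)).sqrt fun x => by positivity

lemma contDiff_Vfield (hu : ContDiff ℝ (⊤ : ℕ∞) u) : ContDiff ℝ 1 (Vfield u) :=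
  ((contDiff_aEl hu).inv fun x => (aEl_pos u x).ne').smul (contDiff_gradient hu)

lemma contDiff_suppFn (hu : ContDiff ℝ (⊤ : ℕ∞) u) : ContDiff ℝ 1 (suppFn u) :=
  (hu.of_le (by norm_cast)).sub (contDiff_id.inner ℝ (contDiff_gradient hu))

lemma contDiff_posTan (hu : ContDiff ℝ (⊤ : ℕ∞) u) : ContDiff ℝ 1 (posTan u) :=
  ((contDiff_aEl hu).smul contDiff_id).add ((contDiff_suppFn hu).smul (contDiff_Vfield hu))

lemma contDiff_posSq (hu : ContDiff ℝ (⊤ : ℕ∞) u) : ContDiff ℝ 1 (posSq u) :=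
  (contDiff_id.norm_sq ℝ).add ((hu.of_le (by norm_cast)).pow 2)

lemma inner_fderiv_gradient_comm (hu : ContDiff ℝ (⊤ : ℕ∞) u) (x v w : E n) :
    ⟪fderiv ℝ (gradient u) x v, w⟫ = ⟪fderiv ℝ (gradient u) x w, v⟫ := by
  have hsymm : IsSymmSndFDerivAt ℝ u x :=
    hu.contDiffAt.isSymmSndFDerivAt (by simpa using by norm_cast)
  have hd : DifferentiableAt ℝ (gradient u) x :=
    (contDiff_gradient hu).differentiable one_ne_zero x
  have key : ∀ v w : E n,
      fderiv ℝ (fderiv ℝ u) x v w = ⟪fderiv ℝ (gradient u) x v, w⟫ := by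
    intro v w
    have hd2 : DifferentiableAt ℝ (fderiv ℝ u) x :=
      (hu.fderiv_right (m := 1) (by norm_cast)).differentiable one_ne_zero x
    have h1 : HasFDerivAt (fun y => fderiv ℝ u y w) _ x :=
      hd2.hasFDerivAt.clm_apply (hasFDerivAt_const w x)
    have h2 : HasFDerivAt (fun y => ⟪gradient u y, w⟫) _ x :=
      hd.hasFDerivAt.inner ℝ (hasFDerivAt_const w x)
    simp_rw [inner_gradient_left] at h2
    simpa using congrArg (fun L => L v) (h1.unique h2)
  rw [← key, ← key, hsymm.eq]

lemma fderiv_aEl (hu : ContDiff ℝ (⊤ : ℕ∞) u) (x v : E n) :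
    fderiv ℝ (aEl u) x v = ⟪Vfield u x, fderiv ℝ (gradient u) x v⟫ := by
  have hd : DifferentiableAt ℝ (gradient u) x :=
    (contDiff_gradient hu).differentiable one_ne_zero x
  have h := ((hd.hasFDerivAt.norm_sq).const_add 1).sqrt (by positivity)
  have h' : HasFDerivAt (aEl u) _ x := h
  rw [h'.fderiv]
  simp only [Vfield, real_inner_smul_left, one_div, mul_inv_rev, smul_apply,
    ContinuousLinearMap.comp_apply, innerSL_apply_apply, smul_eq_mul, aEl, nsmul_eq_mul]
  ring

lemma fderiv_suppFn (hu : ContDiff ℝ (⊤ : ℕ∞) u) (x v : E n) :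
    fderiv ℝ (suppFn u) x v = -⟪x, fderiv ℝ (gradient u) x v⟫ := by
  have hd : DifferentiableAt ℝ (gradient u) x :=
    (contDiff_gradient hu).differentiable one_ne_zero x
  have hud : DifferentiableAt ℝ u x := hu.differentiable (by simp) x
  have h : HasFDerivAt (suppFn u) _ x :=
    hud.hasFDerivAt.sub ((hasFDerivAt_id x).inner ℝ hd.hasFDerivAt)
  rw [h.fderiv]
  simp

lemma sum_fderiv_single (L : E n →L[ℝ] ℝ) (v : E n) :
    ∑ i, v i * L (EuclideanSpace.single i 1) = L v := by
  conv_rhs => rw [← (EuclideanSpace.basisFun (Fin n) ℝ).sum_repr v]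
  simp

lemma div_posTan (hu : ContDiff ℝ (⊤ : ℕ∞) u) (hshr : ShrinkerEq u) (x : E n) :
    ∑ i, fderiv ℝ (fun y => posTan u y i) x (EuclideanSpace.single i 1) =
      n * aEl u x - suppFn u x ^ 2 / aEl u x / 2 := by
  have hda : DifferentiableAt ℝ (aEl u) x := (contDiff_aEl hu).differentiable one_ne_zero x
  have hds : DifferentiableAt ℝ (suppFn u) x := (contDiff_suppFn hu).differentiable one_ne_zero x
  have hdV : ∀ i, DifferentiableAt ℝ (fun y => Vfield u y i) x := fun i =>
    (contDiff_euclidean.1 (contDiff_Vfield hu) i).differentiable one_ne_zero x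
  have hdx : ∀ i, HasFDerivAt (fun y : E n => y i) (EuclideanSpace.proj i : E n →L[ℝ] ℝ) x :=
    fun i => (EuclideanSpace.proj i : E n →L[ℝ] ℝ).hasFDerivAt
  have hi : ∀ i, fderiv ℝ (fun y => posTan u y i) x (EuclideanSpace.single i 1) =
      aEl u x + x i * fderiv ℝ (aEl u) x (EuclideanSpace.single i 1)
      + suppFn u x * fderiv ℝ (fun y => Vfield u y i) x (EuclideanSpace.single i 1)
      + Vfield u x i * fderiv ℝ (suppFn u) x (EuclideanSpace.single i 1) := by
    intro i
    have h : HasFDerivAt (fun y => posTan u y i) _ x :=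
      (hda.hasFDerivAt.mul (hdx i)).add (hds.hasFDerivAt.mul (hdV i).hasFDerivAt)
    rw [h.fderiv]
    simp
    ring
  simp_rw [hi, Finset.sum_add_distrib, ← Finset.mul_sum, sum_fderiv_single]
  have hdiv := hshr x
  rw [divV] at hdiv
  rw [hdiv, fderiv_aEl hu, fderiv_suppFn hu, real_inner_comm,
    inner_fderiv_gradient_comm hu x x, real_inner_comm x]
  have := (aEl_pos u x).ne'
  simp only [suppFn, Finset.sum_const, Finset.card_univ, Fintype.card_fin, nsmul_eq_mul]
  field_simp
  ring

lemma fderiv_posSq_posTan (hu : ContDiff ℝ (⊤ : ℕ∞) u) (x : E n) :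
    fderiv ℝ (posSq u) x (posTan u x) =
      2 * (posSq u x * aEl u x - suppFn u x ^ 2 / aEl u x) := by
  have hud : DifferentiableAt ℝ u x := hu.differentiable (by simp) x
  have h : HasFDerivAt (posSq u) _ x :=
    ((hasFDerivAt_id x).norm_sq).add (hud.hasFDerivAt.pow 2)
  rw [h.fderiv]
  have ha := (aEl_pos u x).ne'
  have ha2 := aEl_sq u x
  have hc := real_inner_comm x (gradient u x)
  have hfd : ∀ w, fderiv ℝ u x w = ⟪gradient u x, w⟫ := fun w => inner_gradient_left.symm
  simp [-inner_gradient_left, -inner_gradient_right, posTan, hfd, Vfield, inner_add_right, real_inner_smul_right,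
    posSq, suppFn, hc]
  generalize aEl u x = a at *
  field_simp
  have hG : ‖gradient u x‖ ^ 2 = a ^ 2 - 1 := by linarith
  rw [hG]
  ring

lemma suppFn_sq_div_aEl_le (u : E n → ℝ) (x : E n) :
    suppFn u x ^ 2 / aEl u x ≤ posSq u x * aEl u x := by
  rw [div_le_iff₀ (aEl_pos u x), mul_assoc, ← sq, aEl_sq, suppFn, posSq]
  have hb := abs_real_inner_le_norm x (gradient u x)
  have h1 : |u x - ⟪x, gradient u x⟫| ≤ |u x| + ‖x‖ * ‖gradient u x‖ :=
    (abs_sub _ _).trans (by gcongr)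
  have h2 := pow_le_pow_left₀ (abs_nonneg _) h1 2
  rw [sq_abs] at h2
  nlinarith [sq_nonneg (|u x| * ‖gradient u x‖ - ‖x‖), sq_abs (u x)]

lemma hasDerivAt_max_zero_sq (y : ℝ) :
    HasDerivAt (fun z : ℝ => max z 0 ^ 2) (2 * max y 0) y := by
  rw [hasDerivAt_iff_isLittleO]
  refine Asymptotics.IsBigO.trans_isLittleO (g := fun z : ℝ => (z - y) ^ 2) ?_ ?_
  · refine Asymptotics.IsBigO.of_bound 1 (Eventually.of_forall fun z => ?_)
    rw [one_mul, Real.norm_eq_abs, Real.norm_eq_abs, abs_of_nonneg (sq_nonneg (z - y)), abs_le,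
      smul_eq_mul]
    rcases max_cases z 0 with ⟨h1, _⟩ | ⟨h1, _⟩ <;> rcases max_cases y 0 with ⟨h2, _⟩ | ⟨h2, _⟩ <;>
      rw [h1, h2] <;> constructor <;> nlinarith [sq_nonneg (z - y)]
  · have h : Tendsto (fun z : ℝ => z - y) (𝓝 y) (𝓝 0) := by
      simpa using (tendsto_id (x := 𝓝 y)).sub_const y
    exact (Asymptotics.isLittleO_pow_id one_lt_two).comp_tendsto h

/-- The cut-off moment `∫ ((t - |X|²)₊)ᵏ w` over the base of the graph of `u`. -/
def cutInt (u w : E n → ℝ) (k : ℕ) (t : ℝ) : ℝ := ∫ x, max (t - posSq u x) 0 ^ k * w x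

lemma integrable_of_posSq_lt {f : E n → ℝ} (hf : Continuous f) {t : ℝ}
    (h : ∀ x, t < posSq u x → f x = 0) : Integrable f := by
  refine hf.integrable_of_hasCompactSupport
    (HasCompactSupport.intro (isCompact_closedBall 0 (|t| + 1)) fun x hx => h x ?_)
  rw [mem_closedBall_zero_iff, not_le] at hx
  have := abs_nonneg t
  unfold posSq
  nlinarith [le_abs_self t, sq_nonneg (u x)]

lemma max_sub_posSq_eq_zero {t : ℝ} {x : E n} (h : t < posSq u x) :
    max (t - posSq u x) 0 = 0 := max_eq_right (by linarith)

lemma integrable_cut (hu : ContDiff ℝ (⊤ : ℕ∞) u) {w : E n → ℝ} (hw : Continuous w) {k : ℕ}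
    (hk : k ≠ 0) (t : ℝ) : Integrable fun x => max (t - posSq u x) 0 ^ k * w x := by
  have hs := (contDiff_posSq hu).continuous
  refine integrable_of_posSq_lt (u := u) (t := t) (by fun_prop) fun x hx => ?_
  simp [max_sub_posSq_eq_zero hx, hk]

lemma hasDerivAt_cutInt (hu : ContDiff ℝ (⊤ : ℕ∞) u) {w : E n → ℝ} (hw : Continuous w) (t : ℝ) :
    HasDerivAt (cutInt u w 2) (2 * cutInt u w 1 t) t := by
  have h := (hasDerivAt_integral_of_dominated_loc_of_deriv_le (μ := volume)
    (F := fun t x => max (t - posSq u x) 0 ^ 2 * w x)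
    (F' := fun t x => 2 * max (t - posSq u x) 0 * w x)
    (bound := fun x => 2 * (max (t + 1 - posSq u x) 0 ^ 1 * |w x|))
    (ball_mem_nhds t one_pos)
    (Eventually.of_forall fun t => (integrable_cut hu hw two_ne_zero t).aestronglyMeasurable)
    (integrable_cut hu hw two_ne_zero t) ?_ ?_
    ((integrable_cut hu hw.abs one_ne_zero (t + 1)).const_mul 2) ?_).2
  · have hval : 2 * cutInt u w 1 t = ∫ x, 2 * max (t - posSq u x) 0 * w x := by
      simp only [cutInt, ← integral_const_mul, pow_one, mul_assoc]
    rw [hval]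
    exact h
  · have hs := (contDiff_posSq hu).continuous
    exact Continuous.aestronglyMeasurable (by fun_prop)
  · refine Eventually.of_forall fun x r hr => ?_
    have hr' : r ≤ t + 1 := by
      have := (abs_lt.1 (Real.dist_eq r t ▸ mem_ball.1 hr)).2
      linarith
    rw [norm_mul, norm_mul, Real.norm_eq_abs (max _ _), abs_of_nonneg (le_max_right _ _),
      Real.norm_eq_abs (w x), Real.norm_ofNat, pow_one, mul_assoc]
    gcongr
  · refine Eventually.of_forall fun x r _ => ?_
    have h1 := ((hasDerivAt_max_zero_sq (r - posSq u x)).comp r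
      ((hasDerivAt_id r).sub_const (posSq u x))).mul_const (w x)
    simpa using h1

lemma hasFDerivAt_cut (hu : ContDiff ℝ (⊤ : ℕ∞) u) (t : ℝ) (x : E n) :
    HasFDerivAt (fun y => max (t - posSq u y) 0 ^ 2)
      (-(2 * max (t - posSq u x) 0) • fderiv ℝ (posSq u) x) x := by
  have hs := ((contDiff_posSq hu).differentiable one_ne_zero x).hasFDerivAt
  have h := (hasDerivAt_max_zero_sq (t - posSq u x)).comp_hasFDerivAt x (hs.const_sub t)
  rw [smul_neg, ← neg_smul] at h
  exact h

lemma integral_cut_mul_div (hu : ContDiff ℝ (⊤ : ℕ∞) u) (t : ℝ) {Z : E n → E n}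
    (hZ : ContDiff ℝ 1 Z) :
    ∫ x, max (t - posSq u x) 0 ^ 2 *
        ∑ i, fderiv ℝ (fun y => Z y i) x (EuclideanSpace.single i 1) =
      ∫ x, 2 * max (t - posSq u x) 0 * fderiv ℝ (posSq u) x (Z x) := by
  have hs := (contDiff_posSq hu).continuous
  have hZi := contDiff_euclidean.1 hZ
  have hZc : ∀ i, Continuous fun x => Z x i := fun i => (hZi i).continuous
  have hsd : ∀ v, Continuous fun x => fderiv ℝ (posSq u) x v := fun v =>
    ((contDiff_posSq hu).continuous_fderiv one_ne_zero).clm_apply continuous_const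
  have hZd : ∀ i v, Continuous fun x => fderiv ℝ (fun y => Z y i) x v := fun i v =>
    ((hZi i).continuous_fderiv one_ne_zero).clm_apply continuous_const
  have hI1 : ∀ i v, Integrable fun x =>
      max (t - posSq u x) 0 ^ 2 * fderiv ℝ (fun y => Z y i) x v := fun i v =>
    integrable_cut hu (hZd i v) two_ne_zero t
  have hI2 : ∀ i v, Integrable fun x =>
      2 * max (t - posSq u x) 0 * (Z x i * fderiv ℝ (posSq u) x v) := fun i v => by
    have := (integrable_cut (w := fun x => Z x i * fderiv ℝ (posSq u) x v) hu
      ((hZc i).mul (hsd v)) one_ne_zero t).const_mul 2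
    simpa only [pow_one, mul_assoc] using this
  have hparts : ∀ i, ∫ x, max (t - posSq u x) 0 ^ 2 *
        fderiv ℝ (fun y => Z y i) x (EuclideanSpace.single i 1) =
      ∫ x, 2 * max (t - posSq u x) 0 *
        (Z x i * fderiv ℝ (posSq u) x (EuclideanSpace.single i 1)) := by
    intro i
    have hf : ∀ x, fderiv ℝ (fun y => max (t - posSq u y) 0 ^ 2) x (EuclideanSpace.single i 1) *
        Z x i = -(2 * max (t - posSq u x) 0 *
          (Z x i * fderiv ℝ (posSq u) x (EuclideanSpace.single i 1))) := fun x => by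
      rw [(hasFDerivAt_cut hu t x).fderiv, smul_apply, smul_eq_mul]
      ring
    rw [integral_mul_fderiv_eq_neg_fderiv_mul_of_integrable]
    · simp_rw [hf]
      rw [integral_neg, neg_neg]
    · simp_rw [hf]
      exact (hI2 i _).neg
    · exact hI1 i _
    · exact integrable_cut hu (hZc i) two_ne_zero t
    · exact fun x _ => (hasFDerivAt_cut hu t x).differentiableAt
    · exact fun x _ => (hZi i).differentiable one_ne_zero x
  simp_rw [← sum_fderiv_single (fderiv ℝ (posSq u) _) (Z _), Finset.mul_sum]
  rw [integral_finsetSum _ fun i _ => hI1 i _, integral_finsetSum _ fun i _ => hI2 i _]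
  exact Finset.sum_congr rfl fun i _ => hparts i

/-- The normal part of the squared position, times the area element. -/
def normalSq (u : E n → ℝ) (x : E n) : ℝ := suppFn u x ^ 2 / aEl u x

lemma continuous_normalSq (hu : ContDiff ℝ (⊤ : ℕ∞) u) : Continuous (normalSq u) :=
  ((contDiff_suppFn hu).continuous.pow 2).div (contDiff_aEl hu).continuous
    fun x => (aEl_pos u x).ne'

lemma cutInt_nonneg {w : E n → ℝ} (hw : ∀ x, 0 ≤ w x) (k : ℕ) (t : ℝ) : 0 ≤ cutInt u w k t :=
  integral_nonneg fun x => mul_nonneg (pow_nonneg (le_max_right _ _) k) (hw x)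

lemma cutInt_first_variation (hu : ContDiff ℝ (⊤ : ℕ∞) u) (hshr : ShrinkerEq u) (t : ℝ) :
    n * cutInt u (aEl u) 2 t - cutInt u (normalSq u) 2 t / 2 =
      4 * ∫ x, max (t - posSq u x) 0 ^ 1 * (posSq u x * aEl u x - normalSq u x) := by
  have h := integral_cut_mul_div hu t (contDiff_posTan hu)
  simp_rw [div_posTan hu hshr, fderiv_posSq_posTan hu] at h
  have ha := integrable_cut hu (contDiff_aEl hu).continuous two_ne_zero t
  have hp := integrable_cut hu (continuous_normalSq hu) two_ne_zero t
  rw [cutInt, cutInt, ← integral_const_mul, ← integral_div, ← integral_const_mul,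
    ← integral_sub (ha.const_mul _) (hp.div_const 2)]
  convert h using 1 <;> congr 1 <;> ext x <;> simp only [normalSq] <;> ring

lemma cutInt_normalSq_le (hu : ContDiff ℝ (⊤ : ℕ∞) u) (hshr : ShrinkerEq u) (t : ℝ) :
    cutInt u (normalSq u) 2 t ≤ 2 * n * cutInt u (aEl u) 2 t := by
  have h := cutInt_first_variation hu hshr t
  have h' : 0 ≤ ∫ x, max (t - posSq u x) 0 ^ 1 * (posSq u x * aEl u x - normalSq u x) :=
    cutInt_nonneg (fun x => sub_nonneg.2 (suppFn_sq_div_aEl_le u x)) 1 t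
  linarith

lemma cutInt_identity (hu : ContDiff ℝ (⊤ : ℕ∞) u) (hshr : ShrinkerEq u) (t : ℝ) :
    (n + 4) * cutInt u (aEl u) 2 t - cutInt u (normalSq u) 2 t / 2 =
      4 * t * cutInt u (aEl u) 1 t - 4 * cutInt u (normalSq u) 1 t := by
  have h := cutInt_first_variation hu hshr t
  have hac := (contDiff_aEl hu).continuous
  have ha2 := integrable_cut hu hac two_ne_zero t
  have ha1 := integrable_cut hu hac one_ne_zero t
  have hp := integrable_cut hu (continuous_normalSq hu) one_ne_zero t
  have h2 : ∫ x, max (t - posSq u x) 0 ^ 1 * (posSq u x * aEl u x - normalSq u x) =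
      t * cutInt u (aEl u) 1 t - cutInt u (aEl u) 2 t - cutInt u (normalSq u) 1 t := by
    rw [cutInt, cutInt, cutInt, ← integral_const_mul, ← integral_sub (ha1.const_mul t) ha2]
    refine Eq.trans ?_ (integral_sub ((ha1.const_mul t).sub ha2) hp)
    congr 1
    ext x
    have : max (t - posSq u x) 0 * (t - posSq u x) = max (t - posSq u x) 0 ^ 2 := by
      rcases max_cases (t - posSq u x) 0 with ⟨h, _⟩ | ⟨h, _⟩ <;> rw [h] <;> ring
    linear_combination (- aEl u x) * this
  rw [h2] at h
  linarith

lemma antitoneOn_cutInt (hu : ContDiff ℝ (⊤ : ℕ∞) u) (hshr : ShrinkerEq u) {m : ℕ}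
    (hm : (n + 4 : ℝ) ≤ 2 * m) :
    AntitoneOn
      (fun t => (t * cutInt u (aEl u) 2 t - cutInt u (normalSq u) 2 t) / t ^ (m + 1))
      (Set.Ici (4 * (m + 1 : ℝ))) := by
  have hpos : ∀ t ∈ Set.Ici (4 * (m + 1 : ℝ)), 0 < t := fun t ht =>
    lt_of_lt_of_le (by positivity) (Set.mem_Ici.1 ht)
  have hd : ∀ t ∈ Set.Ici (4 * (m + 1 : ℝ)), HasDerivAt
      (fun t => (t * cutInt u (aEl u) 2 t - cutInt u (normalSq u) 2 t) / t ^ (m + 1)) _ t :=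
    fun t ht => (((hasDerivAt_id t).mul
      (hasDerivAt_cutInt hu (contDiff_aEl hu).continuous t)).sub
      (hasDerivAt_cutInt hu (continuous_normalSq hu) t)).div (hasDerivAt_pow (m + 1) t)
      (pow_pos (hpos t ht) _).ne'
  refine antitoneOn_of_hasDerivWithinAt_nonpos (convex_Ici _)
    (fun t ht => (hd t ht).continuousAt.continuousWithinAt)
    (fun t ht => (hd t (interior_subset ht)).hasDerivWithinAt) fun t ht => ?_
  have ht' := interior_subset ht
  have h0 := hpos t ht'
  have hF : 0 ≤ cutInt u (aEl u) 2 t := cutInt_nonneg (fun x => (aEl_pos u x).le) 2 t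
  have hP : 0 ≤ cutInt u (normalSq u) 2 t :=
    cutInt_nonneg (fun x => div_nonneg (sq_nonneg _) (aEl_pos u x).le) 2 t
  have hid := cutInt_identity hu hshr t
  refine div_nonpos_of_nonpos_of_nonneg ?_ (by positivity)
  simp only [id, Pi.mul_apply, Pi.sub_apply, Nat.add_sub_cancel]
  push_cast
  have hfac : (1 * cutInt u (aEl u) 2 t + t * (2 * cutInt u (aEl u) 1 t) -
        2 * cutInt u (normalSq u) 1 t) * t ^ (m + 1) -
      (t * cutInt u (aEl u) 2 t - cutInt u (normalSq u) 2 t) * ((m + 1) * t ^ m) =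
      -(t ^ m * ((2 * m - (n + 4)) / 2 * (t * cutInt u (aEl u) 2 t) +
        (t - 4 * (m + 1)) / 4 * cutInt u (normalSq u) 2 t)) := by
    rw [pow_succ]
    linear_combination (-(t ^ m * t) / 2) * hid
  have h1 : 0 ≤ t - 4 * (m + 1) := sub_nonneg.2 ht'
  have h2 : (0 : ℝ) ≤ 2 * m - (n + 4) := sub_nonneg.2 hm
  have : 0 ≤ t ^ m * ((2 * m - (n + 4)) / 2 * (t * cutInt u (aEl u) 2 t) +
        (t - 4 * (m + 1)) / 4 * cutInt u (normalSq u) 2 t) := by positivity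
  linarith

lemma exists_cutInt_le (hu : ContDiff ℝ (⊤ : ℕ∞) u) (hshr : ShrinkerEq u) {m : ℕ}
    (hm : (n + 4 : ℝ) ≤ 2 * m) :
    ∃ C ≥ (0 : ℝ), ∃ t₀ ≥ (1 : ℝ), ∀ t ≥ t₀, cutInt u (aEl u) 2 t ≤ C * t ^ m := by
  set G := fun t : ℝ =>
    (t * cutInt u (aEl u) 2 t - cutInt u (normalSq u) 2 t) / t ^ (m + 1) with hG
  set t₀ : ℝ := 4 * (m + 1) + 4 * n with ht₀
  refine ⟨2 * |G t₀|, by positivity, t₀, ?_, fun t ht => ?_⟩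
  · have : (0 : ℝ) ≤ m := by positivity
    have : (0 : ℝ) ≤ n := by positivity
    linarith
  have hn : (0 : ℝ) ≤ n := by positivity
  have hmem : ∀ s ≥ t₀, s ∈ Set.Ici (4 * (m + 1 : ℝ)) := fun s hs =>
    Set.mem_Ici.2 (by linarith)
  have htpos : 0 < t := lt_of_lt_of_le (by positivity) ht
  have hle : G t ≤ |G t₀| :=
    (antitoneOn_cutInt hu hshr hm (hmem t₀ le_rfl) (hmem t ht) ht).trans (le_abs_self _)
  rw [hG, div_le_iff₀ (by positivity), pow_succ] at hle
  have hP := cutInt_normalSq_le hu hshr t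
  have hF : 0 ≤ cutInt u (aEl u) 2 t := cutInt_nonneg (fun x => (aEl_pos u x).le) 2 t
  have h4 : 4 * (n : ℝ) ≤ t := by
    have : (0 : ℝ) ≤ m := by positivity
    linarith
  refine le_of_mul_le_mul_right ?_ htpos
  nlinarith [mul_le_mul_of_nonneg_right h4 hF]

lemma sq_mul_sVol_le (hu : ContDiff ℝ (⊤ : ℕ∞) u) {r R : ℝ} (hr : 0 ≤ r) (hR : 0 ≤ R) :
    r ^ 2 * sVol u R ≤ cutInt u (aEl u) 2 (r + R ^ 2) := by
  have hac := (contDiff_aEl hu).continuous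
  have hset : {x : E n | ‖Pos u x‖ ≤ R} = {x | posSq u x ≤ R ^ 2} := by
    ext x
    rw [Set.mem_ofPred_eq, Set.mem_ofPred_eq, ← norm_Pos_sq, sq_le_sq₀ (norm_nonneg _) hR]
  have hmeas : MeasurableSet {x : E n | posSq u x ≤ R ^ 2} :=
    (isClosed_le (contDiff_posSq hu).continuous continuous_const).measurableSet
  have hcut := integrable_cut hu hac two_ne_zero (r + R ^ 2)
  rw [sVol, hset, ← integral_const_mul, cutInt, ← integral_indicator hmeas]
  refine integral_mono_of_nonneg
    (f := {x : E n | posSq u x ≤ R ^ 2}.indicator fun x => r ^ 2 * aEl u x)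
    (Eventually.of_forall fun x => ?_) hcut (Eventually.of_forall fun x => ?_)
  · exact Set.indicator_nonneg (fun y _ => mul_nonneg (sq_nonneg r) (aEl_pos u y).le) x
  · refine Set.indicator_apply_le' (fun hx => ?_) fun _ => ?_
    · have hx' : posSq u x ≤ R ^ 2 := hx
      have h1 : r ≤ max (r + R ^ 2 - posSq u x) 0 := le_max_of_le_left (by linarith)
      have := (aEl_pos u x).le
      change r ^ 2 * aEl u x ≤ _ ^ 2 * aEl u x
      gcongr
    · exact mul_nonneg (sq_nonneg _) (aEl_pos u x).le

end

/-- entire graphical self-shrinkers have polynomial volume growth: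
`Vol(Σ ∩ B_R) ≤ C R^{n+2}` for all `R > 1`. -/
theorem stmt_12 (n : ℕ) (u : E n → ℝ) (hu : ContDiff ℝ (⊤ : ℕ∞) u) (hshr : ShrinkerEq u) :
    ∃ C > (0 : ℝ), ∀ R > (1 : ℝ), sVol u R ≤ C * R ^ (n + 2) := by
  have hm : (n + 4 : ℝ) ≤ 2 * (n / 2 + 3 : ℕ) := by
    have : n + 4 ≤ 2 * (n / 2 + 3) := by omega
    exact_mod_cast this
  obtain ⟨C, hC, t₀, ht₀, hbound⟩ := exists_cutInt_le hu hshr hm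
  refine ⟨C * (t₀ + 1) ^ (n / 2 + 3) + 1, by positivity, fun R hR => ?_⟩
  have hR0 : 0 < R := one_pos.trans hR
  have hR2 : 1 ≤ R ^ 2 := one_le_pow₀ hR.le
  have h1 := sq_mul_sVol_le hu (r := t₀ * R ^ 2) (by positivity) hR0.le
  have h2 := hbound (t₀ * R ^ 2 + R ^ 2) (by nlinarith)
  have hvol : 0 ≤ sVol u R := integral_nonneg fun x => (aEl_pos u x).le
  have h3 : R ^ 4 * sVol u R ≤ (t₀ * R ^ 2) ^ 2 * sVol u R := by
    refine mul_le_mul_of_nonneg_right ?_ hvol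
    rw [mul_pow, ← pow_mul]
    exact le_mul_of_one_le_left (by positivity) (one_le_pow₀ ht₀)
  have h4 : (t₀ * R ^ 2 + R ^ 2) ^ (n / 2 + 3) ≤ (t₀ + 1) ^ (n / 2 + 3) * R ^ (n + 6) := by
    rw [← add_one_mul, mul_pow, ← pow_mul]
    gcongr
    · exact hR.le
    · omega
  refine le_of_mul_le_mul_left ?_ (pow_pos hR0 4)
  calc R ^ 4 * sVol u R ≤ C * (t₀ * R ^ 2 + R ^ 2) ^ (n / 2 + 3) := h3.trans (h1.trans h2)
    _ ≤ C * ((t₀ + 1) ^ (n / 2 + 3) * R ^ (n + 6)) := by gcongr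
    _ ≤ C * ((t₀ + 1) ^ (n / 2 + 3) * R ^ (n + 6)) + R ^ (n + 6) :=
      le_add_of_nonneg_right (by positivity)
    _ = R ^ 4 * ((C * (t₀ + 1) ^ (n / 2 + 3) + 1) * R ^ (n + 2)) := by ring
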